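/- For all integers n ≥ 1 and m ≥ 1, if the m-th derivative of Li_{−n} has a zero in the open unit disk {t ∈ ℂ : |t| < 1}, then so does the m-th derivative of Li_{−(n+1)}; equivalently, if the largest root r_{n,m} of A_{n,m} satisfies r_{n,m} > −1, then −1 < r_{n,m} < r_{n+1,m} < 0. In particular the sequence (m_0(n))_{n≥1} is monotonically increasing. -/

import Mathlib

open Polynomial

noncomputable section

/-- The polylogarithm of negative integer order: `Li_{−n}(t) = ∑_{k=1}^∞ k^n t^k`
(the `k = 0` term vanishes for `n ≥ 1`). -/
def fbhLi (n : ℕ) (t : ℂ) : ℂ := ∑' k : ℕ, (k : ℂ) ^ n * t ^ k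

lemma fbh_summable (n : ℕ) {t : ℂ} (ht : ‖t‖ < 1) : Summable fun k : ℕ => (k : ℂ) ^ n * t ^ k :=
  summable_pow_mul_geometric_of_norm_lt_one n ht

lemma fbh_term (n k : ℕ) (y : ℂ) :
    y * ((k : ℂ) ^ n * ((k : ℂ) * y ^ (k - 1))) = (k : ℂ) ^ (n + 1) * y ^ k := by
  cases k with
  | zero => simp
  | succ k => simp only [Nat.add_sub_cancel]; ring

lemma fbhLi_hasDerivAt (n : ℕ) {t : ℂ} (ht : ‖t‖ < 1) :
    HasDerivAt (fbhLi n) (∑' k : ℕ, (k : ℂ) ^ n * ((k : ℂ) * t ^ (k - 1))) t := by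
  obtain ⟨ρ, h1, h2⟩ := exists_between ht
  have hρ0 : 0 < ρ := lt_of_le_of_lt (norm_nonneg t) h1
  have hu : Summable (fun k : ℕ => ρ⁻¹ * ((k : ℝ) ^ (n + 1) * ρ ^ k)) := by
    apply Summable.mul_left
    exact summable_pow_mul_geometric_of_norm_lt_one (n + 1)
      (by rw [Real.norm_of_nonneg hρ0.le]; exact h2)
  refine hasDerivAt_tsum_of_isPreconnected (t := Metric.ball (0 : ℂ) ρ) (y₀ := t)
    (g := fun (k : ℕ) (z : ℂ) => (k : ℂ) ^ n * z ^ k)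
    (g' := fun (k : ℕ) (z : ℂ) => (k : ℂ) ^ n * ((k : ℂ) * z ^ (k - 1)))
    hu Metric.isOpen_ball
    (convex_ball (0 : ℂ) ρ).isPreconnected ?_ ?_ (by simpa using h1) (fbh_summable n ht)
    (by simpa using h1)
  · intro k y _
    exact (hasDerivAt_pow k y).const_mul _
  · intro k y hy
    have hy' : ‖y‖ ≤ ρ := by simpa using (Metric.mem_ball.1 hy).le
    cases k with
    | zero => simp
    | succ k =>
      have h3 : ‖y‖ ^ k ≤ ρ ^ k := pow_le_pow_left₀ (norm_nonneg y) hy' k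
      have h4 : ‖((k + 1 : ℕ) : ℂ)‖ = ((k + 1 : ℕ) : ℝ) := Complex.norm_natCast _
      simp only [Nat.add_sub_cancel, norm_mul, norm_pow, h4]
      have : ρ⁻¹ * (((k + 1 : ℕ) : ℝ) ^ (n + 1) * ρ ^ (k + 1))
          = ((k + 1 : ℕ) : ℝ) ^ n * (((k + 1 : ℕ) : ℝ) * ρ ^ k) := by
        field_simp
        ring
      rw [this]
      gcongr

lemma fbhLi_succ (n : ℕ) {t : ℂ} (ht : ‖t‖ < 1) :
    fbhLi (n + 1) t = t * deriv (fbhLi n) t := by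
  rw [(fbhLi_hasDerivAt n ht).deriv, ← tsum_mul_left]
  simp only [fbh_term]
  rfl

lemma fbhLi_analytic (n : ℕ) : AnalyticOnNhd ℂ (fbhLi n) (Metric.ball 0 1) := by
  apply DifferentiableOn.analyticOnNhd _ Metric.isOpen_ball
  intro t ht
  exact (fbhLi_hasDerivAt n (by simpa using ht)).differentiableAt.differentiableWithinAt

lemma fbhLi_itd (n m : ℕ) {t : ℂ} (ht : ‖t‖ < 1) :
    HasDerivAt (iteratedDeriv m (fbhLi n)) (iteratedDeriv (m + 1) (fbhLi n) t) t := by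
  rw [iteratedDeriv_succ]
  apply DifferentiableAt.hasDerivAt
  rw [iteratedDeriv_eq_iterate]
  exact ((fbhLi_analytic n).iterated_deriv m t (by simpa using ht)).differentiableAt

lemma fbh_nhds {t : ℂ} (ht : ‖t‖ < 1) : ∀ᶠ y in nhds t, ‖y‖ < 1 :=
  (isOpen_lt continuous_norm continuous_const).mem_nhds ht

lemma fbhLi_rec (n m : ℕ) : ∀ {t : ℂ}, ‖t‖ < 1 →
    iteratedDeriv m (fbhLi (n + 1)) t =
      t * iteratedDeriv (m + 1) (fbhLi n) t + m * iteratedDeriv m (fbhLi n) t := by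
  induction m with
  | zero =>
    intro t ht
    simpa [iteratedDeriv_one] using fbhLi_succ n ht
  | succ m ih =>
    intro t ht
    have hev : iteratedDeriv m (fbhLi (n + 1)) =ᶠ[nhds t] fun t =>
        t * iteratedDeriv (m + 1) (fbhLi n) t + m * iteratedDeriv m (fbhLi n) t := by
      filter_upwards [fbh_nhds ht] with y hy using ih hy
    rw [iteratedDeriv_succ, hev.deriv_eq]
    have h := ((hasDerivAt_id t).mul (fbhLi_itd n (m + 1) ht)).add
      ((fbhLi_itd n m ht).const_mul (m : ℂ))
    refine (HasDerivAt.deriv h).trans ?_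
    simp only [id]
    push_cast
    ring

lemma fbhLi_step (n m : ℕ) {φ : ℂ → ℂ} {φ' t : ℂ} (ht : ‖t‖ < 1)
    (hφ : ∀ y : ℂ, ‖y‖ < 1 → iteratedDeriv m (fbhLi n) y = φ y) (hd : HasDerivAt φ φ' t) :
    iteratedDeriv m (fbhLi (n + 1)) t = t * φ' + m * φ t := by
  rw [fbhLi_rec n m ht, hφ t ht]
  have hev : iteratedDeriv m (fbhLi n) =ᶠ[nhds t] φ := by
    filter_upwards [fbh_nhds ht] with y hy using hφ y hy
  rw [(fbhLi_itd n m ht).unique (hd.congr_of_eventuallyEq hev)]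

lemma fbh_one_sub {t : ℂ} (ht : ‖t‖ < 1) : (1 : ℂ) - t ≠ 0 := by
  intro h
  rw [← sub_eq_zero.1 h] at ht
  simp at ht

lemma fbhLi_zero (m : ℕ) : ∀ {t : ℂ}, ‖t‖ < 1 →
    iteratedDeriv m (fbhLi 0) t = (m.factorial : ℂ) / (1 - t) ^ (m + 1) := by
  induction m with
  | zero =>
    intro t ht
    simp [fbhLi, tsum_geometric_of_norm_lt_one ht]
  | succ m ih =>
    intro t ht
    have hev : iteratedDeriv m (fbhLi 0) =ᶠ[nhds t] fun t =>
        (m.factorial : ℂ) / (1 - t) ^ (m + 1) := by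
      filter_upwards [fbh_nhds ht] with y hy using ih hy
    rw [iteratedDeriv_succ, hev.deriv_eq]
    have h0 := fbh_one_sub ht
    have h := (hasDerivAt_const t (m.factorial : ℂ)).div
      (((hasDerivAt_id t).const_sub 1).pow (m + 1)) (pow_ne_zero _ h0)
    refine (HasDerivAt.deriv h).trans ?_
    simp only [id, Nat.add_sub_cancel, Nat.factorial_succ]
    push_cast
    simp only [Pi.pow_apply]
    field_simp
    ring

/-- The numerator polynomials `A_{n,m}`. -/
def fbhA (m : ℕ) : ℕ → ℝ[X]
  | 0 => C (m.factorial : ℝ)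
  | n + 1 => X * (1 - X) * derivative (fbhA m n) + (C (m : ℝ) + C ((n : ℝ) + 1) * X) * fbhA m n

/-- The numerators in the variable `w = t / (t - 1)`. -/
def fbhB (m : ℕ) : ℕ → ℝ[X]
  | 0 => C (m.factorial : ℝ)
  | n + 1 => X * (1 - X) * derivative (fbhB m n) + (C (m : ℝ) - C ((m : ℝ) + 1) * X) * fbhB m n

lemma fbhA_coeff (m : ℕ) (hm : 1 ≤ m) (n : ℕ) :
    (∀ k, 0 ≤ (fbhA m n).coeff k) ∧ 0 < (fbhA m n).coeff 0 ∧
      ∀ k, n < k → (fbhA m n).coeff k = 0 := by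
  induction n with
  | zero =>
    refine ⟨fun k => ?_, ?_, fun k hk => ?_⟩
    · simp only [fbhA, coeff_C]; split_ifs <;> positivity
    · simp only [fbhA, coeff_C_zero]; positivity
    · simp only [fbhA, coeff_C]; rw [if_neg (by omega)]
  | succ n ih =>
    obtain ⟨h1, h2, h3⟩ := ih
    have hm' : (0 : ℝ) < m := by exact_mod_cast hm
    have e : fbhA m (n + 1) = X * derivative (fbhA m n) - X * (X * derivative (fbhA m n))
        + C (m : ℝ) * fbhA m n + C ((n : ℝ) + 1) * (X * fbhA m n) := by
      simp only [fbhA]; ring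
    have c0 : (fbhA m (n + 1)).coeff 0 = m * (fbhA m n).coeff 0 := by
      rw [e]; simp
    have cs : ∀ k, (fbhA m (n + 1)).coeff (k + 1) =
        ((k : ℝ) + 1 + m) * (fbhA m n).coeff (k + 1) + ((n : ℝ) + 1 - k) * (fbhA m n).coeff k := by
      intro k
      rw [e]
      cases k with
      | zero => 
        simp only [coeff_add, coeff_sub, coeff_X_mul, coeff_C_mul, coeff_derivative,
          mul_coeff_zero, coeff_X_zero]
        push_cast
        ring
      | succ k =>
        simp only [coeff_add, coeff_sub, coeff_X_mul, coeff_C_mul, coeff_derivative]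
        push_cast
        ring
    refine ⟨fun k => ?_, ?_, fun k hk => ?_⟩
    · cases k with
      | zero => rw [c0]; positivity
      | succ k =>
        rw [cs]
        by_cases hk : n < k
        · rw [h3 k hk, h3 (k + 1) (by omega)]; simp
        · have : (k : ℝ) ≤ n := by exact_mod_cast not_lt.1 hk
          have a1 := mul_nonneg (by positivity : (0 : ℝ) ≤ (k : ℝ) + 1 + m) (h1 (k + 1))
          have a2 := mul_nonneg (by linarith : (0 : ℝ) ≤ (n : ℝ) + 1 - k) (h1 k)
          linarith
    · rw [c0]; positivity
    · cases k with
      | zero => omega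
      | succ k =>
        rw [cs, h3 k (by omega), h3 (k + 1) (by omega)]; simp

lemma fbhA_pos (m : ℕ) (hm : 1 ≤ m) (n : ℕ) {x : ℝ} (hx : 0 ≤ x) : 0 < (fbhA m n).eval x := by
  obtain ⟨h1, h2, -⟩ := fbhA_coeff m hm n
  rw [eval_eq_sum_range, Finset.sum_range_succ']
  have : 0 ≤ ∑ k ∈ Finset.range (fbhA m n).natDegree,
      (fbhA m n).coeff (k + 1) * x ^ (k + 1) :=
    Finset.sum_nonneg fun k _ => mul_nonneg (h1 _) (by positivity)
  simp only [pow_zero, mul_one]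
  linarith

lemma fbhLi_eq_A (m n : ℕ) : ∀ {t : ℂ}, ‖t‖ < 1 →
    iteratedDeriv m (fbhLi n) t = aeval t (fbhA m n) / (1 - t) ^ (n + m + 1) := by
  induction n with
  | zero =>
    intro t ht
    rw [fbhLi_zero m ht]
    simp [fbhA]
  | succ n ih =>
    intro t ht
    have h0 := fbh_one_sub ht
    have h := ((fbhA m n).hasDerivAt_aeval t).div
      (((hasDerivAt_id t).const_sub 1).pow (n + m + 1)) (pow_ne_zero _ h0)
    rw [fbhLi_step n m ht (fun y hy => ih hy) h]
    have e : (n + 1 + m + 1) = (n + m + 1) + 1 := by omega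
    rw [e]
    simp only [id, Nat.add_sub_cancel, fbhA, map_add, map_mul, map_sub, map_one, aeval_X, aeval_C,
      Pi.pow_apply, Complex.coe_algebraMap]
    push_cast
    field_simp
    ring

lemma fbhLi_eq_B (m n : ℕ) : ∀ {t : ℂ}, ‖t‖ < 1 →
    iteratedDeriv m (fbhLi n) t = aeval (1 - (1 - t)⁻¹) (fbhB m n) / (1 - t) ^ (m + 1) := by
  induction n with
  | zero =>
    intro t ht
    rw [fbhLi_zero m ht]
    simp [fbhB]
  | succ n ih =>
    intro t ht
    have h0 := fbh_one_sub ht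
    have hw : HasDerivAt (fun t : ℂ => 1 - (1 - t)⁻¹) (-(1 / (1 - t) ^ 2)) t := by
      have := ((((hasDerivAt_id t).const_sub 1).inv h0).const_sub 1)
      exact this.congr_deriv (by simp [id])
    have h := (((fbhB m n).hasDerivAt_aeval (1 - (1 - t)⁻¹)).comp t hw).div
      (((hasDerivAt_id t).const_sub 1).pow (m + 1)) (pow_ne_zero _ h0)
    rw [fbhLi_step n m ht (fun y hy => ih hy) h]
    simp only [id, Nat.add_sub_cancel, fbhB, map_add, map_mul, map_sub, map_one, aeval_X, aeval_C,
      Pi.pow_apply, Complex.coe_algebraMap, Function.comp]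
    push_cast
    generalize (aeval (1 - (1 - t)⁻¹)) (fbhB m n) = u
    generalize (aeval (1 - (1 - t)⁻¹)) (derivative (fbhB m n)) = v
    field_simp
    ring

lemma fbhB_zero (m : ℕ) (hm : 1 ≤ m) (n : ℕ) : 0 < (fbhB m n).eval 0 := by
  induction n with
  | zero => simp only [fbhB, eval_C]; positivity
  | succ n ih =>
    have hm' : (0 : ℝ) < m := by exact_mod_cast hm
    simp only [fbhB, eval_add, eval_mul, eval_sub, eval_X, eval_C]
    simp
    positivity

lemma fbh_splits_derivative {p : ℝ[X]} (hp : p.Splits) : (derivative p).Splits := by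
  by_cases h : p.natDegree = 0
  · rw [natDegree_eq_zero] at h
    obtain ⟨c, rfl⟩ := h
    simp
  rw [splits_iff_card_roots] at hp ⊢
  have h1 := card_roots_le_derivative p
  have h2 := card_roots' (derivative p)
  have h3 := natDegree_derivative_lt h
  omega

lemma fbhB_splits (m : ℕ) (hm : 1 ≤ m) (n : ℕ) : (fbhB m n).Splits := by
  induction n with
  | zero => exact Splits.C _
  | succ n ih =>
    obtain ⟨m, rfl⟩ : ∃ k, m = k + 1 := ⟨m - 1, by omega⟩
    have e : X ^ m * fbhB (m + 1) (n + 1) =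
        derivative (X ^ (m + 1) * ((1 - X) * fbhB (m + 1) n)) := by
      simp only [fbhB, derivative_mul, derivative_X_pow, derivative_sub, derivative_one,
        derivative_X, Nat.add_sub_cancel]
      simp only [map_add, map_one, map_natCast, Nat.cast_add, Nat.cast_one]
      ring
    have h1 : ((1 : ℝ[X]) - X).Splits := by
      apply Splits.of_natDegree_le_one
      compute_degree
    have h2 := fbh_splits_derivative ((Splits.X_pow (R := ℝ) (m + 1)).mul (h1.mul ih))
    rw [← e] at h2
    exact (splits_mul_iff_right (pow_ne_zero _ X_ne_zero) (Splits.X_pow m)).1 h2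

lemma fbh_zero_real (m : ℕ) (hm : 1 ≤ m) (n : ℕ) {t : ℂ} (ht : ‖t‖ < 1)
    (h : iteratedDeriv m (fbhLi n) t = 0) :
    ∃ x : ℝ, -1 < x ∧ (fbhA m n).eval x = 0 := by
  have h0 := fbh_one_sub ht
  have hB := h
  rw [fbhLi_eq_B m n ht, div_eq_zero_iff, or_iff_left (pow_ne_zero _ h0)] at hB
  have hne : fbhB m n ≠ 0 := by
    intro h; have := fbhB_zero m hm n; simp [h] at this
  have hmem := (fbhB_splits m hm n).mem_range_of_isRoot (i := algebraMap ℝ ℂ) hne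
    (x := 1 - (1 - t)⁻¹) (by rw [IsRoot.def, eval_map_algebraMap]; exact hB)
  obtain ⟨w, hw⟩ := hmem
  have hw' : (1 - t)⁻¹ = ((1 - w : ℝ) : ℂ) := by
    push_cast
    rw [Complex.coe_algebraMap] at hw
    rw [hw]; ring
  have htx : t = ((1 - (1 - w)⁻¹ : ℝ) : ℂ) := by
    have : (1 - t) = (((1 - w)⁻¹ : ℝ) : ℂ) := by
      rw [Complex.ofReal_inv, ← hw', inv_inv]
    rw [Complex.ofReal_sub, ← this]; simp
  refine ⟨1 - (1 - w)⁻¹, ?_, ?_⟩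
  · rw [htx, Complex.norm_real] at ht
    exact (abs_lt.1 ht).1
  · rw [fbhLi_eq_A m n ht, div_eq_zero_iff, or_iff_left (pow_ne_zero _ h0), htx,
      ← Complex.coe_algebraMap, aeval_algebraMap_apply, Complex.coe_algebraMap,
      Complex.ofReal_eq_zero] at h
    simpa using h

lemma fbh_rolle (m : ℕ) (hm : 1 ≤ m) (n : ℕ) {r : ℝ} (h : (fbhA m n).eval r = 0) :
    r < 0 ∧ ∃ c : ℝ, r < c ∧ c < 0 ∧ (fbhA m (n + 1)).eval c = 0 := by
  have hr : r < 0 := by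
    by_contra hr
    have := fbhA_pos m hm n (not_lt.1 hr)
    linarith
  refine ⟨hr, ?_⟩
  obtain ⟨m, rfl⟩ : ∃ k, m = k + 1 := ⟨m - 1, by omega⟩
  have hd : ∀ x : ℝ, x ≤ 0 → HasDerivAt
      (fun x : ℝ => x ^ (m + 1) * (fbhA (m + 1) n).eval x / (1 - x) ^ (n + (m + 1) + 1))
      (x ^ m * (fbhA (m + 1) (n + 1)).eval x / (1 - x) ^ (n + (m + 1) + 2)) x := by
    intro x hx
    have h0 : (1 : ℝ) - x ≠ 0 := by linarith
    have := ((hasDerivAt_pow (m + 1) x).mul ((fbhA (m + 1) n).hasDerivAt x)).div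
      (((hasDerivAt_id x).const_sub 1).pow (n + (m + 1) + 1)) (pow_ne_zero _ h0)
    refine this.congr_deriv ?_
    simp only [id, Nat.add_sub_cancel, fbhA, eval_add, eval_mul, eval_sub, eval_one, eval_X, eval_C,
      Pi.pow_apply, Pi.mul_apply]
    push_cast
    field_simp
    ring
  obtain ⟨c, ⟨hc1, hc2⟩, hc⟩ := exists_hasDerivAt_eq_zero hr
    (fun x hx => (hd x hx.2).continuousAt.continuousWithinAt)
    (by simp [h]) (fun x hx => hd x hx.2.le)
  refine ⟨c, hc1, hc2, ?_⟩
  have h0 : (1 : ℝ) - c ≠ 0 := by linarith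
  rw [div_eq_zero_iff, or_iff_left (pow_ne_zero _ h0), mul_eq_zero,
    or_iff_right (pow_ne_zero _ hc2.ne)] at hc
  exact hc

lemma fbh_part1 (m : ℕ) (hm : 1 ≤ m) (n : ℕ)
    (h : ∃ t : ℂ, ‖t‖ < 1 ∧ iteratedDeriv m (fbhLi n) t = 0) :
    ∃ t : ℂ, ‖t‖ < 1 ∧ iteratedDeriv m (fbhLi (n + 1)) t = 0 := by
  obtain ⟨t, ht, h⟩ := h
  obtain ⟨x, hx, hA⟩ := fbh_zero_real m hm n ht h
  obtain ⟨-, c, hc1, hc2, hc⟩ := fbh_rolle m hm n hA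
  have hn : ‖(c : ℂ)‖ < 1 := by
    rw [Complex.norm_real, Real.norm_eq_abs, abs_lt]; constructor <;> linarith
  refine ⟨c, hn, ?_⟩
  rw [fbhLi_eq_A m (n + 1) hn, ← Complex.coe_algebraMap, aeval_algebraMap_apply]
  simp [hc]

lemma fbh_unique (m n : ℕ) (P : ℝ[X])
    (hP : ∀ t : ℂ, ‖t‖ < 1 →
      iteratedDeriv m (fbhLi n) t = Polynomial.aeval t P / (1 - t) ^ (n + m + 1)) :
    P = fbhA m n := by
  apply eq_of_infinite_eval_eq
  refine (Set.Ioo_infinite (zero_lt_one (α := ℝ))).mono ?_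
  intro x hx
  have hn : ‖(x : ℂ)‖ < 1 := by
    rw [Complex.norm_real, Real.norm_eq_abs, abs_lt]; constructor <;> linarith [hx.1, hx.2]
  have h0 := fbh_one_sub hn
  have h := hP x hn
  rw [fbhLi_eq_A m n hn, div_left_inj' (pow_ne_zero _ h0), ← Complex.coe_algebraMap,
    aeval_algebraMap_apply, aeval_algebraMap_apply] at h
  have h' := (algebraMap ℝ ℂ).injective h
  simpa using h'.symm

/-- For `n, m ≥ 1`: if the `m`-th derivative of `Li_{−n}` has a zero in the open unit
disk, then so does the `m`-th derivative of `Li_{−(n+1)}`; equivalently, writing `r`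
(resp. `s`) for the largest root `r_{n,m}` of `A_{n,m}` (here `P`) (resp. `r_{n+1,m}` of
`A_{n+1,m}`, here `Q`), if `r > −1` then `−1 < r < s < 0`.  In particular, the sequence
`(m₀ k)_{k ≥ 1}` — where `m₀ k` is the unique positive integer such that
`(d^j/dt^j) Li_{−k}` has no zeros in the open unit disk iff `j ≥ m₀ k` — is
monotonically increasing. -/
theorem statement19 (n m : ℕ) (hn : 1 ≤ n) (hm : 1 ≤ m) (P Q : Polynomial ℝ)
    (hPdeg : P.natDegree = n) (hQdeg : Q.natDegree = n + 1)
    (hP : ∀ t : ℂ, ‖t‖ < 1 →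
      iteratedDeriv m (fbhLi n) t = Polynomial.aeval t P / (1 - t) ^ (n + m + 1))
    (hQ : ∀ t : ℂ, ‖t‖ < 1 →
      iteratedDeriv m (fbhLi (n + 1)) t = Polynomial.aeval t Q / (1 - t) ^ ((n + 1) + m + 1))
    (r s : ℝ)
    (hr : P.IsRoot r ∧ ∀ x : ℝ, P.IsRoot x → x ≤ r)
    (hs : Q.IsRoot s ∧ ∀ x : ℝ, Q.IsRoot x → x ≤ s)
    (m₀ : ℕ → ℕ)
    (hm₀ : ∀ k, 1 ≤ k → (1 ≤ m₀ k ∧ ∀ j : ℕ, 1 ≤ j →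
      ((∀ t : ℂ, ‖t‖ < 1 → iteratedDeriv j (fbhLi k) t ≠ 0) ↔ m₀ k ≤ j))) :
    ((∃ t : ℂ, ‖t‖ < 1 ∧ iteratedDeriv m (fbhLi n) t = 0) →
      (∃ t : ℂ, ‖t‖ < 1 ∧ iteratedDeriv m (fbhLi (n + 1)) t = 0)) ∧
    (-1 < r → (-1 < r ∧ r < s ∧ s < 0)) ∧
    (∀ k, 1 ≤ k → m₀ k ≤ m₀ (k + 1)) := by
  refine ⟨fbh_part1 m hm n, ?_, ?_⟩
  · intro hr1
    have eP := fbh_unique m n P hP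
    have eQ := fbh_unique m (n + 1) Q hQ
    subst eP
    subst eQ
    obtain ⟨-, c, hc1, hc2, hc⟩ := fbh_rolle m hm n hr.1
    refine ⟨hr1, lt_of_lt_of_le hc1 (hs.2 c hc), ?_⟩
    exact (fbh_rolle m hm (n + 1) hs.1).1
  · intro k hk
    have h1 := (hm₀ (k + 1) (by omega)).1
    rw [← (hm₀ k hk).2 (m₀ (k + 1)) h1]
    intro t ht h
    obtain ⟨u, hu, hu0⟩ := fbh_part1 _ h1 k ⟨t, ht, h⟩
    exact ((hm₀ (k + 1) (by omega)).2 _ h1).2 le_rfl u hu hu0
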